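/- Let N,k ≥ 1 be integers, 0 ≤ γ < 1, and p > 1 with pγ ≤ 1. Let u0 ∈ C₀(ℝ^{N+k}) (continuous, vanishing at infinity) with u0 ≥ 0 and u0 ≢ 0. Then the Grushin heat equation with nonlinear memory u_t − Δ_G u = ∫_0^t (t−s)^{−γ} |u(s)|^{p−1}u(s) ds with initial datum u(·,0) = u0 admits no global nonnegative weak solution u belonging to C([0,∞), C₀(ℝ^{N+k})). -/

import Mathlib

open MeasureTheory Real Filter
open scoped ENNReal NNReal

noncomputable section

abbrev Euc (n : ℕ) : Type := EuclideanSpace ℝ (Fin n)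

/-- Second derivative of `f` at `z`, taken twice in the direction `v`. -/
def secondDeriv {N k : ℕ} (f : Euc N × Euc k → ℝ) (z v : Euc N × Euc k) : ℝ :=
  fderiv ℝ (fun w => fderiv ℝ f w v) z v

/-- The Laplacian in the `x`-variables. -/
def laplacianX {N k : ℕ} (f : Euc N × Euc k → ℝ) (z : Euc N × Euc k) : ℝ :=
  ∑ i : Fin N, secondDeriv f z (EuclideanSpace.single i 1, 0)

/-- The Laplacian in the `y`-variables. -/
def laplacianY {N k : ℕ} (f : Euc N × Euc k → ℝ) (z : Euc N × Euc k) : ℝ :=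
  ∑ j : Fin k, secondDeriv f z (0, EuclideanSpace.single j 1)

/-- The Grushin operator `Δ_G = Δ_x + |x|² Δ_y`. -/
def grushin {N k : ℕ} (f : Euc N × Euc k → ℝ) (z : Euc N × Euc k) : ℝ :=
  laplacianX f z + ‖z.1‖ ^ 2 * laplacianY f z

/-- The power nonlinearity `|v|^(p-1) · v`. -/
def absPow (p v : ℝ) : ℝ := |v| ^ (p - 1) * v

/-- The Riemann–Liouville fractional integral `I^α_{0|t} f`. -/
def fracInt (α : ℝ) (f : ℝ → ℝ) (t : ℝ) : ℝ :=
  (1 / Real.Gamma α) * ∫ s in Set.Ioc (0 : ℝ) t, (t - s) ^ (α - 1) * f s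


/-- Weak solution on `ℝ^{N+k} × [0,T]` of
`u_t − Δ_G u = ∫_0^t (t−s)^{−γ}|u(s)|^{p−1}u(s) ds`, `u(·,0) = u0` (with `α = 1 − γ`). -/
def IsWeakSolutionMemory (N k : ℕ) (γ p T : ℝ) (u0 : Euc N × Euc k → ℝ)
    (u : Euc N × Euc k → ℝ → ℝ) : Prop :=
  LocallyIntegrableOn
      (fun q : (Euc N × Euc k) × ℝ => fracInt (1 - γ) (fun s => absPow p (u q.1 s)) q.2)
      (Set.univ ×ˢ Set.Ioo 0 T) volume ∧
  ∀ φ : Euc N × Euc k → ℝ → ℝ,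
    ContDiff ℝ 2 (fun q : (Euc N × Euc k) × ℝ => φ q.1 q.2) →
    HasCompactSupport (fun q : (Euc N × Euc k) × ℝ => φ q.1 q.2) →
    (∀ z, φ z T = 0) →
    ((∫ z, u z T * φ z T) - ∫ z, u0 z * φ z 0) =
      Real.Gamma (1 - γ) *
        (∫ t in Set.Ioc (0 : ℝ) T, ∫ z,
          fracInt (1 - γ) (fun s => absPow p (u z s)) t * φ z t) +
      (∫ t in Set.Ioc (0 : ℝ) T, ∫ z, u z t * grushin (fun w => φ w t) z) +
      (∫ t in Set.Ioc (0 : ℝ) T, ∫ z, u z t * deriv (φ z) t)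

lemma hasDerivAt_posPow (n : ℕ) (x : ℝ) :
    HasDerivAt (fun s : ℝ => (max s 0) ^ (n + 2)) (((n : ℝ) + 2) * (max x 0) ^ (n + 1)) x := by
  rcases lt_trichotomy x 0 with h | h | h
  · have h1 : (fun s : ℝ => (max s 0) ^ (n + 2)) =ᶠ[nhds x] fun _ => 0 := by
      filter_upwards [Iio_mem_nhds h] with s hs
      rw [max_eq_right (le_of_lt hs)]; simp
    rw [max_eq_right h.le]
    simpa using (hasDerivAt_const x (0 : ℝ)).congr_of_eventuallyEq h1
  · subst h
    rw [hasDerivAt_iff_isLittleO]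
    simp only [max_self, sub_zero, ne_eq, Nat.add_eq_zero_iff, OfNat.ofNat_ne_zero, and_false,
      not_false_eq_true, zero_pow, one_ne_zero, mul_zero, smul_eq_mul]
    have h2 : (fun s : ℝ => s ^ (n + 2)) =o[nhds 0] fun s : ℝ => s := by
      simpa using (Asymptotics.isLittleO_pow_pow (𝕜 := ℝ) (m := 1) (n := n + 2) (by omega))
    refine Asymptotics.IsBigO.trans_isLittleO ?_ h2
    refine Asymptotics.IsBigO.of_bound 1 (Eventually.of_forall fun s => ?_)
    rw [one_mul, norm_pow, norm_pow]
    refine pow_le_pow_left₀ (norm_nonneg _) ?_ _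
    rw [Real.norm_eq_abs, Real.norm_eq_abs, abs_of_nonneg (le_max_right _ _)]
    exact max_le (le_abs_self _) (abs_nonneg _)
  · have h1 : (fun s : ℝ => (max s 0) ^ (n + 2)) =ᶠ[nhds x] fun s => s ^ (n + 2) := by
      filter_upwards [Ioi_mem_nhds h] with s hs
      rw [max_eq_left (le_of_lt hs)]
    rw [max_eq_left h.le]
    have := (hasDerivAt_pow (n + 2) x).congr_of_eventuallyEq h1
    simpa using this

lemma contDiff_posPow (n : ℕ) : ContDiff ℝ n (fun s : ℝ => (max s 0) ^ (n + 1)) := by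
  induction n with
  | zero =>
    simp only [Nat.cast_zero]
    rw [contDiff_zero]
    fun_prop
  | succ n ih =>
    push_cast
    rw [contDiff_succ_iff_deriv]
    refine ⟨fun x => (hasDerivAt_posPow n x).differentiableAt, by simp, ?_⟩
    have : deriv (fun s : ℝ => (max s 0) ^ (n + 1 + 1)) =
        fun x => ((n : ℝ) + 2) * (max x 0) ^ (n + 1) :=
      funext fun x => (hasDerivAt_posPow n x).deriv
    rw [this]
    exact contDiff_const.mul ih

lemma contDiff_two_posPow (l : ℕ) (hl : 3 ≤ l) : ContDiff ℝ 2 (fun s : ℝ => (max s 0) ^ l) := by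
  obtain ⟨m, rfl⟩ : ∃ m, l = m + 1 := ⟨l - 1, by omega⟩
  exact (contDiff_posPow m).of_le (by exact_mod_cast (by omega : 2 ≤ m))

lemma young_simple {p q u b d : ℝ} (hp : 1 < p) (hq : q = 1 / (p - 1)) (hu : 0 ≤ u) (hb : 0 ≤ b)
    (hd : 0 < d) : u * b ≤ d * u ^ p + d ^ (-q) * b ^ (1 + q) := by
  have hp1 : 0 < p - 1 := by linarith
  have hq0 : 0 < q := by rw [hq]; positivity
  by_cases h : b ≤ d * u ^ (p - 1)
  · have h1 : u * b ≤ d * u ^ p := by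
      rcases hu.eq_or_lt with h0 | h0
      · rw [← h0]; simp; positivity
      · calc u * b ≤ u * (d * u ^ (p - 1)) := by gcongr
          _ = d * (u ^ (p - 1) * u) := by ring
          _ = d * u ^ p := by rw [← Real.rpow_add_one h0.ne']; ring_nf
    have : 0 ≤ d ^ (-q) * b ^ (1 + q) := by positivity
    linarith
  · push Not at h
    have hb0 : 0 < b := lt_of_le_of_lt (by positivity) h
    have h2 : u ^ (p - 1) ≤ b / d := by rw [le_div_iff₀ hd]; linarith
    have h3 : u ≤ (b / d) ^ q := by
      calc u = (u ^ (p - 1)) ^ q := by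
            rw [← Real.rpow_mul hu, hq]
            rw [mul_one_div_cancel hp1.ne', Real.rpow_one]
        _ ≤ _ := Real.rpow_le_rpow (by positivity) h2 hq0.le
    have h4 : u * b ≤ d ^ (-q) * b ^ (1 + q) := by
      calc u * b ≤ (b / d) ^ q * b := by gcongr
        _ = _ := by
          rw [Real.div_rpow hb0.le hd.le, Real.rpow_neg hd.le, Real.rpow_add hb0, Real.rpow_one]
          field_simp
    have : 0 ≤ d * u ^ p := by positivity
    linarith
def bmp {n : ℕ} (c x : Euc n) : ℝ := max (1 - ‖x - c‖ ^ 2) 0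

lemma bmp_nonneg {n : ℕ} (c x : Euc n) : 0 ≤ bmp c x := le_max_right _ _

lemma bmp_cont {n : ℕ} (c : Euc n) : Continuous (bmp c) := by
  unfold bmp; fun_prop

lemma bmp_mul {n : ℕ} (c x : Euc n) : bmp c x * ‖x - c‖ ^ 2 = bmp c x * (1 - bmp c x) := by
  unfold bmp
  rcases le_total (1 - ‖x - c‖ ^ 2) 0 with h | h
  · rw [max_eq_right h]; simp
  · rw [max_eq_left h]; ring

lemma bmp_zero {n : ℕ} (c x : Euc n) (h : x ∉ Metric.closedBall c 1) : bmp c x = 0 := by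
  rw [Metric.mem_closedBall, dist_eq_norm, not_le] at h
  unfold bmp
  apply max_eq_right
  nlinarith

lemma bmp_contDiff {n : ℕ} (c : Euc n) : ContDiff ℝ 2 (fun x => bmp c x ^ 3) := by
  have h : ContDiff ℝ 2 (fun x : Euc n => 1 - ‖x - c‖ ^ 2) :=
    contDiff_const.sub ((contDiff_id.sub contDiff_const).norm_sq ℝ)
  exact (contDiff_two_posPow 3 le_rfl).comp h

lemma bmp_hasFDerivAt {n : ℕ} (c x : Euc n) (m : ℕ) :
    HasFDerivAt (fun x => bmp c x ^ (m + 2))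
      ((((m : ℝ) + 2) * bmp c x ^ (m + 1)) • (-((2 : ℝ) • (innerSL ℝ (x - c)))) : Euc n →L[ℝ] ℝ) x := by
  have h : HasFDerivAt (fun x : Euc n => 1 - ‖x - c‖ ^ 2) (-((2 : ℝ) • (innerSL ℝ (x - c))) : Euc n →L[ℝ] ℝ) x := by
    have := (((hasFDerivAt_id x).sub_const c).norm_sq).const_sub 1
    exact HasFDerivAt.congr_fderiv this (by ext v; simp)
  exact (hasDerivAt_posPow m (1 - ‖x - c‖ ^ 2)).comp_hasFDerivAt x h

/-- second derivative of the bump along a linear map -/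
lemma secondDeriv_bump {N k n : ℕ} (c : Euc n) (P : (Euc N × Euc k) →L[ℝ] Euc n)
    (B : Euc N × Euc k → ℝ) (hB : Differentiable ℝ B) (v : Euc N × Euc k)
    (hBv : ∀ z, fderiv ℝ B z v = 0) (z : Euc N × Euc k) :
    secondDeriv (fun z => bmp c (P z) ^ 3 * B z) z v =
      (24 * bmp c (P z) * (inner ℝ (P z - c) (P v)) ^ 2
        - 6 * bmp c (P z) ^ 2 * inner ℝ (P v) (P v)) * B z := by
  unfold secondDeriv
  have h1 : ∀ w, fderiv ℝ (fun z => bmp c (P z) ^ 3 * B z) w v =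
      bmp c (P w) ^ 2 * (-6 * inner ℝ (P w - c) (P v)) * B w := by
    intro w
    have := ((bmp_hasFDerivAt c (P w) 1).comp w P.hasFDerivAt).mul (hB w).hasFDerivAt
    erw [this.fderiv]
    simp [hBv, -map_sub]
    ring
  simp_rw [h1]
  have h2 := ((bmp_hasFDerivAt c (P z) 0).comp z P.hasFDerivAt)
  have h3 : HasFDerivAt (fun w : Euc N × Euc k => (inner ℝ (P w - c) (P v) : ℝ))
      ((innerSL ℝ (P v)).comp P) z := by
    have h := ((innerSL ℝ (P v)).hasFDerivAt).comp z (P.hasFDerivAt.sub_const (x := z) c)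
    refine h.congr_of_eventuallyEq (Eventually.of_forall fun w => ?_)
    simp only [Function.comp, innerSL_apply_apply]
    exact real_inner_comm _ _
  have h4 := (h2.mul (h3.const_mul (-6))).mul (hB z).hasFDerivAt
  erw [h4.fderiv]
  simp [hBv, -map_sub, -inner_self_eq_norm_sq_to_K]
  ring

def psi {N k : ℕ} (c : Euc N × Euc k) (z : Euc N × Euc k) : ℝ := bmp c.1 z.1 ^ 3 * bmp c.2 z.2 ^ 3

lemma sum_inner_sq {n : ℕ} (x : Euc n) :
    ∑ i : Fin n, (inner ℝ x (EuclideanSpace.single i (1 : ℝ))) ^ 2 = ‖x‖ ^ 2 := by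
  rw [EuclideanSpace.norm_sq_eq]
  refine Finset.sum_congr rfl fun i _ => ?_
  simp [EuclideanSpace.inner_single_right]

lemma lapX_psi {N k : ℕ} (c z : Euc N × Euc k) : laplacianX (psi c) z =
    (24 * bmp c.1 z.1 * ‖z.1 - c.1‖ ^ 2 - 6 * N * bmp c.1 z.1 ^ 2) * bmp c.2 z.2 ^ 3 := by
  unfold laplacianX
  have hB : Differentiable ℝ (fun w : Euc N × Euc k => bmp c.2 w.2 ^ 3) :=
    ((bmp_contDiff c.2).differentiable (by norm_num)).comp differentiable_snd
  have key : ∀ i : Fin N, secondDeriv (psi c) z (EuclideanSpace.single i 1, 0) =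
      (24 * bmp c.1 z.1 * (inner ℝ (z.1 - c.1) (EuclideanSpace.single i (1 : ℝ))) ^ 2
        - 6 * bmp c.1 z.1 ^ 2) * bmp c.2 z.2 ^ 3 := by
    intro i
    have := secondDeriv_bump c.1 (ContinuousLinearMap.fst ℝ (Euc N) (Euc k)) _ hB
      (EuclideanSpace.single i 1, 0) (by
        intro w
        have := (bmp_hasFDerivAt c.2 w.2 1).comp w
          (ContinuousLinearMap.snd ℝ (Euc N) (Euc k)).hasFDerivAt
        erw [this.fderiv]
        simp) z
    have e : psi c = fun z => bmp c.1 z.1 ^ 3 * bmp c.2 z.2 ^ 3 := rfl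
    rw [e]
    simpa using this
  simp_rw [key]
  rw [← Finset.sum_mul, Finset.sum_sub_distrib, ← Finset.mul_sum, sum_inner_sq]
  simp
  left; ring

lemma lapY_psi {N k : ℕ} (c z : Euc N × Euc k) : laplacianY (psi c) z =
    (24 * bmp c.2 z.2 * ‖z.2 - c.2‖ ^ 2 - 6 * k * bmp c.2 z.2 ^ 2) * bmp c.1 z.1 ^ 3 := by
  unfold laplacianY
  have hB : Differentiable ℝ (fun w : Euc N × Euc k => bmp c.1 w.1 ^ 3) :=
    ((bmp_contDiff c.1).differentiable (by norm_num)).comp differentiable_fst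
  have key : ∀ i : Fin k, secondDeriv (psi c) z (0, EuclideanSpace.single i 1) =
      (24 * bmp c.2 z.2 * (inner ℝ (z.2 - c.2) (EuclideanSpace.single i (1 : ℝ))) ^ 2
        - 6 * bmp c.2 z.2 ^ 2) * bmp c.1 z.1 ^ 3 := by
    intro i
    have := secondDeriv_bump c.2 (ContinuousLinearMap.snd ℝ (Euc N) (Euc k)) _ hB
      (0, EuclideanSpace.single i 1) (by
        intro w
        have := (bmp_hasFDerivAt c.1 w.1 1).comp w
          (ContinuousLinearMap.fst ℝ (Euc N) (Euc k)).hasFDerivAt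
        erw [this.fderiv]
        simp) z
    have e : psi c = fun z => bmp c.2 z.2 ^ 3 * bmp c.1 z.1 ^ 3 := by
      funext z; unfold psi; ring
    rw [e]
    simpa  using this
  simp_rw [key]
  rw [← Finset.sum_mul, Finset.sum_sub_distrib, ← Finset.mul_sum, sum_inner_sq]
  simp
  left; ring

lemma psi_contDiff {N k : ℕ} (c : Euc N × Euc k) : ContDiff ℝ 2 (psi c) :=
  ((bmp_contDiff c.1).comp contDiff_fst).mul ((bmp_contDiff c.2).comp contDiff_snd)

lemma psi_nonneg {N k : ℕ} (c z : Euc N × Euc k) : 0 ≤ psi c z := by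
  have := bmp_nonneg c.1 z.1
  have := bmp_nonneg c.2 z.2
  unfold psi; positivity

def KK {N k : ℕ} (c : Euc N × Euc k) : Set (Euc N × Euc k) :=
  Metric.closedBall c.1 1 ×ˢ Metric.closedBall c.2 1

lemma KK_compact {N k : ℕ} (c : Euc N × Euc k) : IsCompact (KK c) :=
  (isCompact_closedBall _ _).prod (isCompact_closedBall _ _)

lemma psi_zero {N k : ℕ} (c z : Euc N × Euc k) (h : z ∉ KK c) : psi c z = 0 := by
  unfold psi
  by_cases h1 : z.1 ∈ Metric.closedBall c.1 1
  · have h2 : z.2 ∉ Metric.closedBall c.2 1 := fun h2 => h ⟨h1, h2⟩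
    simp [bmp_zero _ _ h2]
  · simp [bmp_zero _ _ h1]

lemma grushin_psi_zero {N k : ℕ} (c z : Euc N × Euc k) (h : z ∉ KK c) :
    grushin (psi c) z = 0 := by
  unfold grushin
  rw [lapX_psi, lapY_psi]
  by_cases h1 : z.1 ∈ Metric.closedBall c.1 1
  · have h2 : z.2 ∉ Metric.closedBall c.2 1 := fun h2 => h ⟨h1, h2⟩
    simp [bmp_zero _ _ h2]
  · simp [bmp_zero _ _ h1]

lemma grushin_psi_cont {N k : ℕ} (c : Euc N × Euc k) : Continuous (grushin (psi c)) := by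
  have e : grushin (psi c) = fun z =>
    (24 * bmp c.1 z.1 * ‖z.1 - c.1‖ ^ 2 - 6 * N * bmp c.1 z.1 ^ 2) * bmp c.2 z.2 ^ 3
    + ‖z.1‖ ^ 2 *
    ((24 * bmp c.2 z.2 * ‖z.2 - c.2‖ ^ 2 - 6 * k * bmp c.2 z.2 ^ 2) * bmp c.1 z.1 ^ 3) := by
    funext z
    unfold grushin
    rw [lapX_psi, lapY_psi]
  rw [e]
  have h1 : Continuous fun z : Euc N × Euc k => bmp c.1 z.1 := (bmp_cont c.1).comp continuous_fst
  have h2 : Continuous fun z : Euc N × Euc k => bmp c.2 z.2 := (bmp_cont c.2).comp continuous_snd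
  fun_prop

lemma bmp_ineq {n : ℕ} (c x : Euc n) :
    -((24 + 6 * (n : ℝ)) ^ 2 / 96) * bmp c x ^ 3 ≤
      24 * bmp c x * ‖x - c‖ ^ 2 - 6 * n * bmp c x ^ 2 := by
  have h1 := bmp_mul c x
  have h2 := bmp_nonneg c x
  rw [mul_assoc 24, h1]
  generalize bmp c x = m at *
  have : 0 ≤ m * ((24 + 6 * (n : ℝ)) * m / 2 - 24) ^ 2 / 24 := by positivity
  nlinarith

lemma grushin_psi_lower {N k : ℕ} (c : Euc N × Euc k) : ∃ lam : ℝ, 0 ≤ lam ∧ ∀ z,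
    -lam * psi c z ≤ grushin (psi c) z := by
  refine ⟨(24 + 6 * (N : ℝ)) ^ 2 / 96 + (‖c.1‖ + 1) ^ 2 * ((24 + 6 * (k : ℝ)) ^ 2 / 96),
    by positivity, fun z => ?_⟩
  by_cases hz : z ∈ KK c
  · unfold grushin
    rw [lapX_psi, lapY_psi]
    have h1 := bmp_ineq c.1 z.1
    have h2 := bmp_ineq c.2 z.2
    have n1 : 0 ≤ bmp c.1 z.1 ^ 3 := pow_nonneg (bmp_nonneg c.1 z.1) 3
    have n2 : 0 ≤ bmp c.2 z.2 ^ 3 := pow_nonneg (bmp_nonneg c.2 z.2) 3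
    have h3 := mul_le_mul_of_nonneg_right h1 n2
    have h4 := mul_le_mul_of_nonneg_left (mul_le_mul_of_nonneg_right h2 n1) (sq_nonneg ‖z.1‖)
    have h5 : ‖z.1‖ ^ 2 ≤ (‖c.1‖ + 1) ^ 2 := by
      have := hz.1
      rw [Metric.mem_closedBall, dist_eq_norm] at this
      have h6 : ‖z.1‖ ≤ ‖c.1‖ + ‖z.1 - c.1‖ := by
        have := norm_add_le c.1 (z.1 - c.1)
        rwa [add_sub_cancel] at this
      exact pow_le_pow_left₀ (norm_nonneg _) (by linarith) 2
    have h7 := mul_le_mul_of_nonneg_right h5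
      (by positivity : 0 ≤ ((24 + 6 * (k : ℝ)) ^ 2 / 96) * (bmp c.1 z.1 ^ 3 * bmp c.2 z.2 ^ 3))
    unfold psi
    nlinarith
  · rw [psi_zero c z hz, grushin_psi_zero c z hz]; simp

lemma grushin_mul_const {N k : ℕ} (f : Euc N × Euc k → ℝ) (hf : ContDiff ℝ 2 f) (a : ℝ)
    (z : Euc N × Euc k) : grushin (fun w => f w * a) z = grushin f z * a := by
  have key : ∀ v, secondDeriv (fun w => f w * a) z v = secondDeriv f z v * a := by
    intro v
    unfold secondDeriv
    have h1 : ∀ w, fderiv ℝ (fun w => f w * a) w v = fderiv ℝ f w v * a := by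
      intro w
      rw [fderiv_mul_const ((hf.differentiable (by norm_num)) w)]
      simp [mul_comm]
    simp_rw [h1]
    have h2 : Differentiable ℝ (fun w => fderiv ℝ f w v) := by
      have : ContDiff ℝ 1 (fderiv ℝ f) := hf.fderiv_right (by norm_num)
      exact (this.differentiable (by norm_num)).clm_apply (differentiable_const v)
    rw [fderiv_mul_const (h2 z)]
    simp [mul_comm]
  unfold grushin laplacianX laplacianY
  simp_rw [key, ← Finset.sum_mul]
  ring
def vv (L t : ℝ) : ℝ := max (1 - Real.log (1 + t ^ 2) / L) 0

def aa (γ t : ℝ) : ℝ := (1 + t ^ 2) ^ (-(1 - γ) / 2)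

def th (γ L : ℝ) (l : ℕ) (t : ℝ) : ℝ := aa γ t * vv L t ^ l

lemma vv_nonneg (L t : ℝ) : 0 ≤ vv L t := le_max_right _ _

lemma vv_le_one {L : ℝ} (hL : 0 < L) (t : ℝ) : vv L t ≤ 1 := by
  unfold vv
  refine max_le ?_ zero_le_one
  have : 0 ≤ Real.log (1 + t ^ 2) := Real.log_nonneg (by nlinarith [sq_nonneg t])
  have : 0 ≤ Real.log (1 + t ^ 2) / L := by positivity
  linarith

lemma vv_zero_of {L t : ℝ} (hL : 0 < L) (h : L ≤ Real.log (1 + t ^ 2)) : vv L t = 0 := by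
  unfold vv
  apply max_eq_right
  have : 1 ≤ Real.log (1 + t ^ 2) / L := by rwa [le_div_iff₀ hL, one_mul]
  linarith

lemma log_contDiff : ContDiff ℝ 2 (fun t : ℝ => Real.log (1 + t ^ 2)) := by
  refine ContDiff.log (by fun_prop) (fun t => by positivity)

lemma vv_cont (L : ℝ) : Continuous (vv L) := by
  unfold vv
  have := log_contDiff.continuous
  fun_prop

lemma aa_pos (γ t : ℝ) : 0 < aa γ t := by unfold aa; positivity

lemma aa_contDiff (γ : ℝ) : ContDiff ℝ 2 (aa γ) := by
  unfold aa
  refine ContDiff.rpow_const_of_ne (by fun_prop) (fun t => by positivity)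

lemma aa_le_one {γ : ℝ} (hγ : γ < 1) (t : ℝ) : aa γ t ≤ 1 := by
  unfold aa
  exact Real.rpow_le_one_of_one_le_of_nonpos (by nlinarith [sq_nonneg t]) (by linarith)

lemma th_contDiff (γ L : ℝ) (l : ℕ) (hl : 3 ≤ l) : ContDiff ℝ 2 (th γ L l) := by
  unfold th
  refine (aa_contDiff γ).mul ?_
  have h : ContDiff ℝ 2 (fun t : ℝ => 1 - Real.log (1 + t ^ 2) / L) :=
    contDiff_const.sub (log_contDiff.div_const L)
  exact (contDiff_two_posPow l hl).comp h

lemma th_compact (γ T : ℝ) (hT : 0 < T) (l : ℕ) (hl : 3 ≤ l) :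
    HasCompactSupport (th γ (Real.log (1 + T ^ 2)) l) := by
  refine HasCompactSupport.intro (isCompact_Icc (a := -T) (b := T)) fun t ht => ?_
  unfold th
  rw [vv_zero_of]
  · rw [zero_pow (by omega), mul_zero]
  · exact Real.log_pos (by nlinarith)
  · refine Real.log_le_log (by positivity) ?_
    have : T < |t| := by
      by_contra h
      push Not at h
      exact ht ⟨by linarith [neg_abs_le t], le_trans (le_abs_self t) h⟩
    have := sq_abs t
    nlinarith

lemma arg_hasDerivAt (L t : ℝ) : HasDerivAt (fun t : ℝ => 1 - Real.log (1 + t ^ 2) / L)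
    (-(2 * t / (1 + t ^ 2) / L)) t := by
  have h1 : HasDerivAt (fun t : ℝ => 1 + t ^ 2) (2 * t) t := by
    simpa using (hasDerivAt_pow 2 t).const_add 1
  exact ((h1.log (by positivity)).div_const L).const_sub 1

lemma vvpow_hasDerivAt (L t : ℝ) (m : ℕ) : HasDerivAt (fun t : ℝ => vv L t ^ (m + 2))
    (((m : ℝ) + 2) * vv L t ^ (m + 1) * (-(2 * t / (1 + t ^ 2) / L))) t :=
  (hasDerivAt_posPow m _).comp t (arg_hasDerivAt L t)

lemma aa_hasDerivAt (γ t : ℝ) :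
    HasDerivAt (aa γ) (-((1 - γ) * (t / (1 + t ^ 2)) * aa γ t)) t := by
  have h1 : HasDerivAt (fun t : ℝ => 1 + t ^ 2) (2 * t) t := by
    simpa using (hasDerivAt_pow 2 t).const_add 1
  have hp : 0 < 1 + t ^ 2 := by positivity
  have := h1.rpow_const (p := -(1 - γ) / 2) (Or.inl hp.ne')
  refine this.congr_deriv ?_
  unfold aa
  rw [Real.rpow_sub_one hp.ne']
  field_simp

lemma frac_le_one {t : ℝ} : t / (1 + t ^ 2) ≤ 1 / 2 := by
  rw [div_le_iff₀ (by positivity)]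
  nlinarith [sq_nonneg (t - 1)]

lemma th_bound {γ L lam : ℝ} (hγ0 : 0 ≤ γ) (hγ1 : γ < 1) (hL : 1 ≤ L) (hlam : 0 ≤ lam) (m : ℕ)
    {t : ℝ} (ht : 0 ≤ t) :
    lam * th γ L (m + 2) t - deriv (th γ L (m + 2)) t ≤
      (lam + m + 3) * aa γ t * vv L t ^ (m + 1) := by
  have hd := ((aa_hasDerivAt γ t).mul (vvpow_hasDerivAt L t m)).deriv
  have e : th γ L (m + 2) = (aa γ * fun t => vv L t ^ (m + 2)) := rfl
  rw [e, hd, ← e]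
  unfold th
  have ha := aa_pos γ t
  have hv := vv_nonneg L t
  have hv1 := vv_le_one (L := L) (by linarith) t
  have hb0 : 0 ≤ t / (1 + t ^ 2) := by positivity
  have hb1 := frac_le_one (t := t)
  have hc0 : 2 * t / (1 + t ^ 2) / L ≤ 1 := by
    rw [div_le_iff₀ (by linarith), mul_div_assoc]; linarith
  have hw0 : 0 ≤ vv L t ^ (m + 1) := by positivity
  have hw1 : vv L t ^ (m + 2) ≤ vv L t ^ (m + 1) := pow_le_pow_of_le_one hv hv1 (by omega)
  have hw2 : 0 ≤ vv L t ^ (m + 2) := by positivity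
  generalize vv L t ^ (m + 2) = w2 at *
  generalize vv L t ^ (m + 1) = w1 at *
  generalize aa γ t = a at *
  generalize 2 * t / (1 + t ^ 2) / L = c at *
  generalize t / (1 + t ^ 2) = b at *
  have h1 : lam * (a * w2) ≤ lam * (a * w1) := by gcongr
  have h2 : (1 - γ) * b * a * w2 ≤ 1 * 1 * a * w1 := by
    gcongr <;> linarith
  have h3 : a * (((m : ℝ) + 2) * w1 * c) ≤ a * (((m : ℝ) + 2) * w1 * 1) := by gcongr
  nlinarith

lemma half_bound (t : ℝ) (ht : 0 ≤ t) :
    (1 + t ^ 2) ^ (-(1 / 2) : ℝ) ≤ 2 * t / (1 + t ^ 2) + 2 * (1 / (1 + t ^ 2)) := by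
  have hp : 0 < 1 + t ^ 2 := by positivity
  rw [Real.rpow_neg hp.le, ← Real.sqrt_eq_rpow]
  have h1 : Real.sqrt (1 + t ^ 2) ≤ 2 * t + 2 := by
    apply Real.sqrt_le_iff.mpr; constructor <;> nlinarith
  have h2 : 0 < Real.sqrt (1 + t ^ 2) := Real.sqrt_pos.mpr hp
  have h3 := Real.mul_self_sqrt hp.le
  rw [inv_le_iff_one_le_mul₀ h2, ← mul_div_assoc, ← add_div, div_mul_eq_mul_div,
    le_div_iff₀ hp]
  nlinarith

lemma half_cont : Continuous (fun t : ℝ => (1 + t ^ 2) ^ (-(1 / 2) : ℝ)) := by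
  refine Continuous.rpow_const (by fun_prop) (fun t => Or.inl (by positivity))

lemma half_int (T : ℝ) (hT : 0 ≤ T) :
    ∫ t in (0 : ℝ)..T, (1 + t ^ 2) ^ (-(1 / 2) : ℝ) ≤ Real.log (1 + T ^ 2) + 4 := by
  have hc : Continuous fun t : ℝ => 2 * t / (1 + t ^ 2) + 2 * (1 / (1 + t ^ 2)) := by
    have h : ∀ t : ℝ, 1 + t ^ 2 ≠ 0 := fun t => by positivity
    fun_prop (disch := exact h _)
  have h1 : ∫ t in (0 : ℝ)..T, (1 + t ^ 2) ^ (-(1 / 2) : ℝ) ≤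
      ∫ t in (0 : ℝ)..T, (2 * t / (1 + t ^ 2) + 2 * (1 / (1 + t ^ 2))) := by
    apply intervalIntegral.integral_mono_on hT (half_cont.intervalIntegrable _ _)
      (hc.intervalIntegrable _ _)
    intro t ht
    exact half_bound t ht.1
  have h2 : ∫ t in (0 : ℝ)..T, (2 * t / (1 + t ^ 2) + 2 * (1 / (1 + t ^ 2))) =
      (Real.log (1 + T ^ 2) + 2 * Real.arctan T) - (Real.log (1 + 0 ^ 2) + 2 * Real.arctan 0) := by
    apply intervalIntegral.integral_eq_sub_of_hasDerivAt
      (f := fun t => Real.log (1 + t ^ 2) + 2 * Real.arctan t)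
    · intro t _
      have h1 : HasDerivAt (fun t : ℝ => 1 + t ^ 2) (2 * t) t := by
        simpa using (hasDerivAt_pow 2 t).const_add 1
      exact (h1.log (by positivity)).add ((Real.hasDerivAt_arctan t).const_mul 2)
    · exact hc.intervalIntegrable _ _
  have := Real.arctan_lt_pi_div_two T
  have := Real.pi_lt_four
  rw [h2] at h1
  simp at h1
  simp
  linarith

/-- energy part -/
lemma memory_lower {γ L T : ℝ} (hT : 0 < T) (hL : L = Real.log (1 + T ^ 2)) (m : ℕ)
    (g : ℝ → ℝ) (hg : Continuous g) (hg0 : ∀ t, 0 ≤ g t) :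
    ∫ t in (0 : ℝ)..T, g t * (L / (2 * (m + 3)) * vv L t ^ (m + 3)) ≤
    ∫ t in (0 : ℝ)..T, (1 + t ^ 2) ^ (-γ / 2) * (∫ s in (0 : ℝ)..t, g s) * th γ L (m + 2) t := by
  have hL0 : 0 < L := by rw [hL]; exact Real.log_pos (by nlinarith)
  have hG : ∀ t, HasDerivAt (fun t => ∫ s in (0 : ℝ)..t, g s) (g t) t := fun t =>
    intervalIntegral.integral_hasDerivAt_right (hg.intervalIntegrable _ _)
      (hg.stronglyMeasurableAtFilter _ _) hg.continuousAt
  have hGc : Continuous (fun t => ∫ s in (0 : ℝ)..t, g s) :=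
    continuous_iff_continuousAt.mpr fun t => (hG t).continuousAt
  have hV : ∀ t, HasDerivAt (fun t => L / (2 * ((m : ℝ) + 3)) * vv L t ^ (m + 3))
      (-(t / (1 + t ^ 2) * vv L t ^ (m + 2))) t := by
    intro t
    refine ((vvpow_hasDerivAt L t (m + 1)).const_mul _).congr_deriv ?_
    push_cast
    have : (0 : ℝ) < 1 + t ^ 2 := by positivity
    have : (0 : ℝ) < (m : ℝ) + 3 := by positivity
    rw [show (m : ℝ) + 1 + 2 = m + 3 by ring]
    field_simp
  have hvc := vv_cont L
  have hq : ∀ t : ℝ, 1 + t ^ 2 ≠ 0 := fun t => by positivity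
  have hVc : Continuous fun t : ℝ => -(t / (1 + t ^ 2) * vv L t ^ (m + 2)) := by
    fun_prop (disch := exact hq _)
  have hparts := intervalIntegral.integral_mul_deriv_eq_deriv_mul
    (u := fun t => ∫ s in (0 : ℝ)..t, g s)
    (v := fun t => L / (2 * ((m : ℝ) + 3)) * vv L t ^ (m + 3)) (a := 0) (b := T)
    (fun t _ => hG t) (fun t _ => hV t) (hg.intervalIntegrable _ _) (hVc.intervalIntegrable _ _)
  have hvT : vv L T = 0 := vv_zero_of hL0 hL.le
  simp only [hvT, intervalIntegral.integral_same, zero_mul, sub_zero, ne_eq,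
    Nat.add_eq_zero_iff, OfNat.ofNat_ne_zero, and_false, not_false_eq_true, zero_pow, mul_zero,
    zero_sub] at hparts
  have e1 : ∫ t in (0 : ℝ)..T, g t * (L / (2 * (m + 3)) * vv L t ^ (m + 3)) =
      ∫ t in (0 : ℝ)..T, (∫ s in (0 : ℝ)..t, g s) * (t / (1 + t ^ 2) * vv L t ^ (m + 2)) := by
    have : ∫ t in (0 : ℝ)..T, (∫ s in (0 : ℝ)..t, g s) * (t / (1 + t ^ 2) * vv L t ^ (m + 2))
      = - ∫ t in (0 : ℝ)..T, (∫ s in (0 : ℝ)..t, g s) *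
        (-(t / (1 + t ^ 2) * vv L t ^ (m + 2))) := by
      rw [← intervalIntegral.integral_neg]; congr 1; funext t; ring
    rw [this, hparts, neg_neg]
  rw [e1]
  have hthc : Continuous (th γ L (m + 2)) := (aa_contDiff γ).continuous.mul (hvc.pow _)
  have hgc : Continuous fun t : ℝ => (1 + t ^ 2) ^ (-γ / 2) :=
    Continuous.rpow_const (by fun_prop) (fun t => Or.inl (by positivity))
  apply intervalIntegral.integral_mono_on hT.le
  · apply Continuous.intervalIntegrable
    fun_prop (disch := exact hq _)
  · apply Continuous.intervalIntegrable
    fun_prop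
  · intro t ht
    have hp : 0 < 1 + t ^ 2 := by positivity
    have hGn : 0 ≤ ∫ s in (0 : ℝ)..t, g s :=
      intervalIntegral.integral_nonneg ht.1 fun s _ => hg0 s
    have hvn : 0 ≤ vv L t ^ (m + 2) := pow_nonneg (vv_nonneg L t) _
    have e2 : (1 + t ^ 2) ^ (-γ / 2) * aa γ t = (Real.sqrt (1 + t ^ 2))⁻¹ := by
      unfold aa
      rw [← Real.rpow_add hp, Real.sqrt_eq_rpow, ← Real.rpow_neg hp.le]
      congr 1; ring
    have e3 : t / (1 + t ^ 2) ≤ (Real.sqrt (1 + t ^ 2))⁻¹ := by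
      have h2 : 0 < Real.sqrt (1 + t ^ 2) := Real.sqrt_pos.mpr hp
      have h3 := Real.mul_self_sqrt hp.le
      have h4 : t ≤ Real.sqrt (1 + t ^ 2) := Real.le_sqrt_of_sq_le (by linarith)
      rw [div_le_iff₀ hp, ← div_eq_inv_mul, le_div_iff₀ h2]
      nlinarith
    calc (∫ s in (0 : ℝ)..t, g s) * (t / (1 + t ^ 2) * vv L t ^ (m + 2))
        ≤ (∫ s in (0 : ℝ)..t, g s) * ((Real.sqrt (1 + t ^ 2))⁻¹ * vv L t ^ (m + 2)) := by gcongr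
      _ = _ := by rw [← e2]; unfold th; ring

lemma young_step {γ p q L f g Psi C t : ℝ} (hγ1 : γ < 1) (hp : 1 < p) (hpγ : p * γ ≤ 1)
    (hq : q = 1 / (p - 1)) (hL : 0 < L) (m : ℕ) (hm : 2 * q ≤ m + 1) (hC : 0 ≤ C) (hP : 0 ≤ Psi)
    (hg0 : 0 ≤ g)
    (hY : ∀ b d, 0 ≤ b → 0 < d → f * b ≤ d * g + d ^ (-q) * b ^ (1 + q) * Psi) :
    f * (C * aa γ t * vv L t ^ (m + 1)) ≤
      1 / 2 * (g * (L / (2 * (m + 3)) * vv L t ^ (m + 3))) +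
        (1 / (4 * ((m : ℝ) + 3)) * L) ^ (-q) * C ^ (1 + q) * Psi * (1 + t ^ 2) ^ (-(1 / 2) : ℝ) := by
  have hp1 : 0 < p - 1 := by linarith
  have hq0 : 0 < q := by rw [hq]; positivity
  have ha := aa_pos γ t
  have hone : 1 ≤ 1 + t ^ 2 := by nlinarith [sq_nonneg t]
  have hap : aa γ t ^ (1 + q) ≤ (1 + t ^ 2) ^ (-(1 / 2) : ℝ) := by
    unfold aa
    rw [← Real.rpow_mul (by positivity)]
    apply Real.rpow_le_rpow_of_exponent_le hone
    have : 1 ≤ (1 - γ) * (1 + q) := by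
      have : 1 + q = p / (p - 1) := by rw [hq]; field_simp; ring
      rw [this, ← mul_div_assoc, le_div_iff₀ hp1]
      nlinarith
    linarith
  rcases (vv_nonneg L t).eq_or_lt with h0 | h0
  · rw [← h0]
    have : 0 ≤ (1 / (4 * ((m : ℝ) + 3)) * L) ^ (-q) * C ^ (1 + q) * Psi *
      (1 + t ^ 2) ^ (-(1 / 2) : ℝ) := by positivity
    simpa using this
  · have hv1 := vv_le_one hL t
    set v := vv L t
    set κ := 1 / (4 * ((m : ℝ) + 3)) * L with hκ
    have hκ0 : 0 < κ := by positivity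
    have h1 := hY (C * aa γ t) (κ * v ^ 2) (by positivity) (by positivity)
    have h2 := mul_le_mul_of_nonneg_right h1 (by positivity : 0 ≤ v ^ (m + 1))
    have e1 : κ * v ^ 2 * g * v ^ (m + 1) = 1 / 2 * (g * (L / (2 * (m + 3)) * v ^ (m + 3))) := by
      rw [hκ]; field_simp; ring
    have e2 : (κ * v ^ 2) ^ (-q) * v ^ (m + 1) ≤ κ ^ (-q) := by
      rw [Real.mul_rpow hκ0.le (by positivity), mul_assoc]
      have : (v ^ 2) ^ (-q) * v ^ (m + 1) ≤ 1 := by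
        rw [← Real.rpow_natCast v 2, ← Real.rpow_mul h0.le, ← Real.rpow_natCast v (m + 1),
          ← Real.rpow_add h0]
        apply Real.rpow_le_one h0.le hv1
        push_cast; linarith
      exact mul_le_of_le_one_right (by positivity) this
    have e3 : (C * aa γ t) ^ (1 + q) ≤ C ^ (1 + q) * (1 + t ^ 2) ^ (-(1 / 2) : ℝ) := by
      rw [Real.mul_rpow hC ha.le]; gcongr
    have e4 : ((κ * v ^ 2) ^ (-q) * v ^ (m + 1)) * (C * aa γ t) ^ (1 + q) * Psi ≤
        κ ^ (-q) * (C ^ (1 + q) * (1 + t ^ 2) ^ (-(1 / 2) : ℝ)) * Psi := by gcongr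
    nlinarith

lemma ode_core {γ p q lam Psi f0 : ℝ} {f g : ℝ → ℝ} (hγ0 : 0 ≤ γ) (hγ1 : γ < 1) (hp : 1 < p)
    (hpγ : p * γ ≤ 1) (hq : q = 1 / (p - 1)) (hlam : 0 ≤ lam) (hP : 0 ≤ Psi)
    (hf : Continuous f) (hg : Continuous g) (hf0 : ∀ t, 0 ≤ f t) (hg0 : ∀ t, 0 ≤ g t)
    (hY : ∀ t b d, 0 ≤ b → 0 < d → f t * b ≤ d * g t + d ^ (-q) * b ^ (1 + q) * Psi)
    (hI : ∀ T, 0 < T → ∀ θ : ℝ → ℝ, ContDiff ℝ 2 θ → HasCompactSupport θ → θ T = 0 →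
      (∀ t, 0 ≤ θ t) →
      f0 * θ 0 + ∫ t in (0 : ℝ)..T, (1 + t ^ 2) ^ (-γ / 2) * (∫ s in (0 : ℝ)..t, g s) * θ t ≤
        ∫ t in (0 : ℝ)..T, f t * (lam * θ t - deriv θ t)) : f0 ≤ 0 := by
  by_contra hf0pos
  push Not at hf0pos
  have hp1 : 0 < p - 1 := by linarith
  have hq0 : 0 < q := by rw [hq]; positivity
  obtain ⟨m, hm1, hm⟩ : ∃ m : ℕ, 1 ≤ m ∧ 2 * q ≤ m + 1 := by
    obtain ⟨n, hn⟩ := exists_nat_ge (2 * q)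
    exact ⟨n + 1, by omega, by push_cast; linarith⟩
  set C : ℝ := lam + m + 3 with hC
  have hC0 : 0 ≤ C := by positivity
  have hac := (aa_contDiff γ).continuous
  -- basic inequality
  have base : ∀ T L, 0 < T → L = Real.log (1 + T ^ 2) → 1 ≤ L →
      f0 + ∫ t in (0 : ℝ)..T, g t * (L / (2 * (m + 3)) * vv L t ^ (m + 3)) ≤
        ∫ t in (0 : ℝ)..T, f t * (C * aa γ t * vv L t ^ (m + 1)) := by
    intro T L hT hL hL1
    have hvc := vv_cont L
    have hth := th_contDiff γ L (m + 2) (by omega)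
    have h1 := hI T hT (th γ L (m + 2)) hth
      (by rw [hL]; exact th_compact γ T hT (m + 2) (by omega))
      (by unfold th; rw [vv_zero_of (by linarith) hL.le]; simp)
      (fun t => mul_nonneg (aa_pos γ t).le (pow_nonneg (vv_nonneg L t) _))
    have e0 : th γ L (m + 2) 0 = 1 := by simp [th, aa, vv]
    rw [e0, mul_one] at h1
    have h2 := memory_lower (γ := γ) hT hL m g hg hg0
    have h3 : ∫ t in (0 : ℝ)..T, f t * (lam * th γ L (m + 2) t - deriv (th γ L (m + 2)) t) ≤
        ∫ t in (0 : ℝ)..T, f t * (C * aa γ t * vv L t ^ (m + 1)) := by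
      have c1 := hth.continuous
      have c2 : Continuous (deriv (th γ L (m + 2))) := hth.continuous_deriv (by norm_num)
      apply intervalIntegral.integral_mono_on hT.le
      · apply Continuous.intervalIntegrable; fun_prop
      · apply Continuous.intervalIntegrable; fun_prop
      · intro t ht
        exact mul_le_mul_of_nonneg_left (th_bound hγ0 hγ1 hL1 hlam m ht.1) (hf0 t)
    linarith
  -- decay of the energy
  set D : ℝ := (1 / (4 * ((m : ℝ) + 3))) ^ (-q) * C ^ (1 + q) * Psi with hD
  have hD0 : 0 ≤ D := by positivity
  have step : ∀ T L, 0 < T → L = Real.log (1 + T ^ 2) → 1 ≤ L →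
      ∫ t in (0 : ℝ)..T, g t * vv L t ^ (m + 3) ≤ (20 * ((m : ℝ) + 3) * D) * L ^ (-q) := by
    intro T L hT hL hL1
    have hvc := vv_cont L
    have hhc := half_cont
    have h1 := base T L hT hL hL1
    have h2 : ∫ t in (0 : ℝ)..T, f t * (C * aa γ t * vv L t ^ (m + 1)) ≤
        ∫ t in (0 : ℝ)..T, (1 / 2 * (g t * (L / (2 * (m + 3)) * vv L t ^ (m + 3))) +
          (1 / (4 * ((m : ℝ) + 3)) * L) ^ (-q) * C ^ (1 + q) * Psi *
            (1 + t ^ 2) ^ (-(1 / 2) : ℝ)) := by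
      apply intervalIntegral.integral_mono_on hT.le
      · apply Continuous.intervalIntegrable; fun_prop
      · apply Continuous.intervalIntegrable; fun_prop
      · intro t ht
        exact young_step hγ1 hp hpγ hq (by linarith) m hm hC0 hP (hg0 t) (hY t)
    rw [intervalIntegral.integral_add (by apply Continuous.intervalIntegrable; fun_prop)
      (by apply Continuous.intervalIntegrable; fun_prop), intervalIntegral.integral_const_mul,
      intervalIntegral.integral_const_mul] at h2
    have h3 := half_int T hT.le
    rw [← hL] at h3
    have e1 : (1 / (4 * ((m : ℝ) + 3)) * L) ^ (-q) * C ^ (1 + q) * Psi = D * L ^ (-q) := by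
      rw [Real.mul_rpow (by positivity) (by linarith), hD]; ring
    rw [e1] at h2
    have e2 : ∫ t in (0 : ℝ)..T, g t * (L / (2 * (m + 3)) * vv L t ^ (m + 3)) =
        L / (2 * (m + 3)) * ∫ t in (0 : ℝ)..T, g t * vv L t ^ (m + 3) := by
      rw [← intervalIntegral.integral_const_mul]; congr 1; funext t; ring
    rw [e2] at h1 h2
    set X := ∫ t in (0 : ℝ)..T, g t * vv L t ^ (m + 3)
    set Y := ∫ t in (0 : ℝ)..T, (1 + t ^ 2) ^ (-(1 / 2) : ℝ)
    have h4 : D * L ^ (-q) * Y ≤ D * L ^ (-q) * (5 * L) := by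
      gcongr; linarith
    have h5 : L / (2 * (m + 3)) * X ≤ L * (10 * (D * L ^ (-q))) := by linarith
    have h6 : X / (2 * (m + 3)) ≤ 10 * (D * L ^ (-q)) := by
      refine le_of_mul_le_mul_left ?_ (by linarith : 0 < L)
      calc L * (X / (2 * (m + 3))) = L / (2 * (m + 3)) * X := by ring
        _ ≤ _ := h5
    rw [div_le_iff₀ (by positivity)] at h6
    linarith
  -- the energy vanishes
  have hzero : ∀ S, 0 < S → ∫ t in (0 : ℝ)..S, g t ≤ 0 := by
    intro S hS
    have hlim : Tendsto (fun L : ℝ => 2 ^ (m + 3) * ((20 * ((m : ℝ) + 3) * D) * L ^ (-q)))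
        atTop (nhds (2 ^ (m + 3) * ((20 * ((m : ℝ) + 3) * D) * 0))) :=
      ((tendsto_rpow_neg_atTop hq0).const_mul _).const_mul _
    rw [mul_zero, mul_zero] at hlim
    refine ge_of_tendsto hlim ?_
    filter_upwards [eventually_ge_atTop (1 : ℝ),
      eventually_ge_atTop (2 * Real.log (1 + S ^ 2))] with L hL1 hL2
    have hLpos : 0 < L := by linarith
    have hE : 0 < Real.exp L - 1 := by
      have := Real.add_one_le_exp L; linarith
    set T := Real.sqrt (Real.exp L - 1) with hTdef
    have hT : 0 < T := Real.sqrt_pos.mpr hE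
    have hTsq : T ^ 2 = Real.exp L - 1 := Real.sq_sqrt hE.le
    have hL : L = Real.log (1 + T ^ 2) := by
      rw [hTsq, add_sub_cancel, Real.log_exp]
    have hST : S ≤ T := by
      have h1 : Real.log (1 + S ^ 2) ≤ Real.log (1 + T ^ 2) := by
        rw [← hL]
        have : 0 ≤ Real.log (1 + S ^ 2) := Real.log_nonneg (by nlinarith)
        linarith
      have h2 := (Real.log_le_log_iff (by positivity) (by positivity)).mp h1
      exact le_of_sq_le_sq (by linarith) hT.le
    have hvc := vv_cont L
    have h1 := step T L hT hL hL1
    have h2 : ∫ t in (0 : ℝ)..S, g t * vv L t ^ (m + 3) ≤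
        ∫ t in (0 : ℝ)..T, g t * vv L t ^ (m + 3) := by
      apply intervalIntegral.integral_mono_interval le_rfl hS.le hST
      · exact Eventually.of_forall fun t => mul_nonneg (hg0 t) (pow_nonneg (vv_nonneg L t) _)
      · apply Continuous.intervalIntegrable; fun_prop
    have h3 : ∫ t in (0 : ℝ)..S, g t ≤
        ∫ t in (0 : ℝ)..S, 2 ^ (m + 3) * (g t * vv L t ^ (m + 3)) := by
      apply intervalIntegral.integral_mono_on hS.le
      · apply Continuous.intervalIntegrable; fun_prop
      · apply Continuous.intervalIntegrable; fun_prop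
      · intro t ht
        have hv : 1 / 2 ≤ vv L t := by
          refine le_trans ?_ (le_max_left _ _)
          have h1 : Real.log (1 + t ^ 2) ≤ Real.log (1 + S ^ 2) := by
            refine Real.log_le_log (by positivity) ?_
            have := ht.1; have := ht.2
            nlinarith
          have : Real.log (1 + t ^ 2) / L ≤ 1 / 2 := by
            rw [div_le_iff₀ hLpos]; linarith
          linarith
        have h4 : 1 ≤ (2 * vv L t) ^ (m + 3) := one_le_pow₀ (by linarith)
        rw [mul_pow] at h4
        have := mul_le_mul_of_nonneg_left h4 (hg0 t)
        linarith
    rw [intervalIntegral.integral_const_mul] at h3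
    refine h3.trans ?_
    gcongr
    exact h2.trans h1
  -- conclusion
  have hE : 0 < Real.exp 1 - 1 := by
    have := Real.add_one_le_exp (1 : ℝ); linarith
  set T := Real.sqrt (Real.exp 1 - 1) with hTdef
  have hT : 0 < T := Real.sqrt_pos.mpr hE
  have hTsq : T ^ 2 = Real.exp 1 - 1 := Real.sq_sqrt hE.le
  have hL : (1 : ℝ) = Real.log (1 + T ^ 2) := by
    rw [hTsq, add_sub_cancel, Real.log_exp]
  have hvc := vv_cont 1
  have h1 := base T 1 hT hL le_rfl
  have h2 : 0 ≤ ∫ t in (0 : ℝ)..T, g t * (1 / (2 * (m + 3)) * vv 1 t ^ (m + 3)) := by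
    apply intervalIntegral.integral_nonneg hT.le
    intro t _
    have := hg0 t
    have := vv_nonneg 1 t
    positivity
  have h3 : ∀ d : ℝ, 0 < d → f0 ≤ d ^ (-q) * (C ^ (1 + q) * Psi * T) := by
    intro d hd
    have h4 : ∫ t in (0 : ℝ)..T, f t * (C * aa γ t * vv 1 t ^ (m + 1)) ≤
        ∫ t in (0 : ℝ)..T, (d * g t + d ^ (-q) * C ^ (1 + q) * Psi) := by
      apply intervalIntegral.integral_mono_on hT.le
      · apply Continuous.intervalIntegrable; fun_prop
      · apply Continuous.intervalIntegrable; fun_prop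
      · intro t ht
        refine le_trans ?_ (hY t C d hC0 hd)
        refine mul_le_mul_of_nonneg_left ?_ (hf0 t)
        have a1 := aa_le_one hγ1 t
        have a0 := (aa_pos γ t).le
        have b1 : vv 1 t ^ (m + 1) ≤ 1 := pow_le_one₀ (vv_nonneg 1 t) (vv_le_one one_pos t)
        have b0 : 0 ≤ vv 1 t ^ (m + 1) := pow_nonneg (vv_nonneg 1 t) _
        calc C * aa γ t * vv 1 t ^ (m + 1) ≤ C * 1 * 1 := by gcongr
          _ = C := by ring
    rw [intervalIntegral.integral_add (by apply Continuous.intervalIntegrable; fun_prop)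
      (by apply Continuous.intervalIntegrable; fun_prop), intervalIntegral.integral_const_mul,
      intervalIntegral.integral_const] at h4
    simp only [sub_zero, smul_eq_mul] at h4
    have h5 := mul_nonpos_of_nonneg_of_nonpos hd.le (hzero T hT)
    linarith
  have hlim : Tendsto (fun d : ℝ => d ^ (-q) * (C ^ (1 + q) * Psi * T))
      atTop (nhds (0 * (C ^ (1 + q) * Psi * T))) := (tendsto_rpow_neg_atTop hq0).mul_const _
  rw [zero_mul] at hlim
  have : f0 ≤ 0 := ge_of_tendsto hlim (by
    filter_upwards [eventually_gt_atTop (0 : ℝ)] with d hd using h3 d hd)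
  linarith
lemma param_cont {N k : ℕ} (c : Euc N × Euc k) (W : (Euc N × Euc k) × ℝ → ℝ) (hW : Continuous W)
    (ρ : Euc N × Euc k → ℝ) (hρ : Continuous ρ) (hρ0 : ∀ z, z ∉ KK c → ρ z = 0) :
    Continuous fun t : ℝ => ∫ z, W (z, t) * ρ z := by
  have := continuousOn_integral_of_compact_support (μ := (volume : Measure (Euc N × Euc k)))
    (f := fun (t : ℝ) z => W (z, t) * ρ z) (s := Set.univ) (KK_compact c)
    (Continuous.continuousOn (by
      have : Continuous fun q : ℝ × (Euc N × Euc k) => W (q.2, q.1) * ρ q.2 := by fun_prop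
      exact this)) (by
      intro t z _ hz
      simp [hρ0 z hz])
  exact continuousOn_univ.mp this

lemma slice_int {N k : ℕ} (c : Euc N × Euc k) (W : (Euc N × Euc k) × ℝ → ℝ) (hW : Continuous W)
    (ρ : Euc N × Euc k → ℝ) (hρ : Continuous ρ) (hρ0 : ∀ z, z ∉ KK c → ρ z = 0) (t : ℝ) :
    Integrable (fun z => W (z, t) * ρ z) := by
  refine Continuous.integrable_of_hasCompactSupport (by fun_prop) ?_
  exact HasCompactSupport.intro (KK_compact c) fun z hz => by simp [hρ0 z hz]

lemma kernel_int {γ : ℝ} (hγ1 : γ < 1) {t : ℝ} (ht : 0 ≤ t) :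
    IntegrableOn (fun s : ℝ => (t - s) ^ (-γ)) (Set.Ioc 0 t) := by
  have h := intervalIntegral.intervalIntegrable_rpow' (a := 0) (b := t) (r := -γ) (by linarith)
  have h2 := (h.comp_sub_left t)
  simp only [sub_zero, sub_self] at h2
  exact (intervalIntegrable_iff_integrableOn_Ioc_of_le ht).mp h2.symm

lemma memory_fubini {N k : ℕ} {γ : ℝ} (hγ1 : γ < 1) (c : Euc N × Euc k)
    (W : (Euc N × Euc k) × ℝ → ℝ) (hW : Continuous W)
    (ρ : Euc N × Euc k → ℝ) (hρ : Continuous ρ) (hρ0 : ∀ z, z ∉ KK c → ρ z = 0) {t : ℝ}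
    (ht : 0 ≤ t) :
    ∫ z, (∫ s in Set.Ioc 0 t, (t - s) ^ (-γ) * W (z, s)) * ρ z =
      ∫ s in Set.Ioc 0 t, (t - s) ^ (-γ) * ∫ z, W (z, s) * ρ z := by
  have hρi : Integrable ρ := Continuous.integrable_of_hasCompactSupport hρ
    (HasCompactSupport.intro (KK_compact c) hρ0)
  obtain ⟨M, hM⟩ := ((KK_compact c).prod (isCompact_Icc (a := (0 : ℝ)) (b := t))).exists_bound_of_continuousOn
    hW.continuousOn
  have hint : Integrable (Function.uncurry fun (z : Euc N × Euc k) (s : ℝ) =>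
      (t - s) ^ (-γ) * W (z, s) * ρ z) (volume.prod (volume.restrict (Set.Ioc 0 t))) := by
    have hb := (hρi.mul_prod (kernel_int hγ1 ht)).norm.const_mul M
    refine hb.mono' ?_ ?_
    · have hmeas : Measurable fun q : (Euc N × Euc k) × ℝ =>
          (t - q.2) ^ (-γ) * W q * ρ q.1 := by
        refine Measurable.mul (Measurable.mul ?_ hW.measurable) (hρ.measurable.comp measurable_fst)
        exact (measurable_const.sub measurable_snd).pow_const _
      exact hmeas.aestronglyMeasurable
    · have e : (volume : Measure (Euc N × Euc k)).prod (volume.restrict (Set.Ioc (0 : ℝ) t)) =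
          (volume.prod volume).restrict (Set.univ ×ˢ Set.Ioc (0 : ℝ) t) := by
        rw [← Measure.prod_restrict, Measure.restrict_univ]
      rw [e, ae_restrict_iff' (MeasurableSet.univ.prod measurableSet_Ioc)]
      refine Eventually.of_forall ?_
      rintro ⟨z, s⟩ ⟨-, hs⟩
      simp only [Function.uncurry_apply_pair, norm_mul]
      by_cases hz : z ∈ KK c
      · have h1 := hM (z, s) ⟨hz, ⟨hs.1.le, hs.2⟩⟩
        calc ‖(t - s) ^ (-γ)‖ * ‖W (z, s)‖ * ‖ρ z‖ ≤ ‖(t - s) ^ (-γ)‖ * M * ‖ρ z‖ := by gcongr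
          _ = _ := by ring
      · simp [hρ0 z hz]
  have e1 : ∀ z, (∫ s in Set.Ioc 0 t, (t - s) ^ (-γ) * W (z, s)) * ρ z =
      ∫ s in Set.Ioc 0 t, (t - s) ^ (-γ) * W (z, s) * ρ z := fun z =>
    (integral_mul_const _ _).symm
  simp_rw [e1]
  rw [integral_integral_swap hint]
  congr 1
  funext s
  rw [← integral_const_mul]
  congr 1
  funext z
  ring

lemma conv_int {γ : ℝ} (hγ1 : γ < 1) (g : ℝ → ℝ) (hg : Continuous g) {T : ℝ} (hT : 0 < T) :
    IntegrableOn (fun t => ∫ s in Set.Ioc 0 t, (t - s) ^ (-γ) * g s) (Set.Ioc 0 T) := by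
  have h1 : Integrable ((Set.Ioc 0 T).indicator g) :=
    (integrable_indicator_iff measurableSet_Ioc).mpr (hg.integrableOn_Ioc)
  have h2 : Integrable ((Set.Ico 0 T).indicator fun r : ℝ => r ^ (-γ)) := by
    rw [integrable_indicator_iff measurableSet_Ico]
    have h := intervalIntegral.intervalIntegrable_rpow' (a := 0) (b := T) (r := -γ) (by linarith)
    have h' := (intervalIntegrable_iff_integrableOn_Icc_of_le hT.le).mp h
    exact h'.mono_set Set.Ico_subset_Icc_self
  have h3 := (h1.integrable_convolution (ContinuousLinearMap.mul ℝ ℝ) h2).integrableOn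
    (s := Set.Ioc 0 T)
  refine h3.congr_fun ?_ measurableSet_Ioc
  intro t ht
  simp only [convolution_def, ContinuousLinearMap.mul_apply']
  rw [← integral_indicator measurableSet_Ioc]
  congr 1
  funext s
  by_cases hs : s ∈ Set.Ioc 0 t
  · have m1 : s ∈ Set.Ioc 0 T := ⟨hs.1, hs.2.trans ht.2⟩
    have m2 : t - s ∈ Set.Ico 0 T := ⟨by linarith [hs.2], by linarith [hs.1, ht.2]⟩
    rw [Set.indicator_of_mem hs, Set.indicator_of_mem m1, Set.indicator_of_mem m2]
    ring
  · rw [Set.indicator_of_notMem hs]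
    by_cases hs0 : 0 < s
    · have : t - s ∉ Set.Ico 0 T := fun h => hs ⟨hs0, by linarith [h.1]⟩
      rw [Set.indicator_of_notMem this, mul_zero]
    · rw [Set.indicator_of_notMem (fun h => hs0 h.1), zero_mul]

lemma kernel_lower {γ : ℝ} (hγ0 : 0 ≤ γ) (hγ1 : γ < 1) (g : ℝ → ℝ) (hg : Continuous g)
    (hg0 : ∀ t, 0 ≤ g t) {t : ℝ} (ht : 0 ≤ t) :
    (1 + t ^ 2) ^ (-γ / 2) * (∫ s in (0 : ℝ)..t, g s) ≤
      ∫ s in Set.Ioc 0 t, (t - s) ^ (-γ) * g s := by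
  rw [intervalIntegral.integral_of_le ht, ← integral_const_mul, integral_Ioc_eq_integral_Ioo,
    integral_Ioc_eq_integral_Ioo]
  have hi : IntegrableOn (fun s => (t - s) ^ (-γ) * g s) (Set.Ioo 0 t) := by
    have h1 := (integrableOn_Icc_iff_integrableOn_Ioc (by simp)).mpr (kernel_int hγ1 ht)
    exact (h1.mul_continuousOn hg.continuousOn isCompact_Icc).mono_set Set.Ioo_subset_Icc_self
  refine setIntegral_mono_on ?_ hi measurableSet_Ioo ?_
  · exact ((continuous_const.mul hg).integrableOn_Icc (a := 0) (b := t)).mono_set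
      Set.Ioo_subset_Icc_self
  · intro s hs
    refine mul_le_mul_of_nonneg_right ?_ (hg0 s)
    have hpos : 0 < t - s := by linarith [hs.2]
    have h1 : (1 + t ^ 2) ^ (-γ / 2) = (Real.sqrt (1 + t ^ 2)) ^ (-γ) := by
      rw [Real.sqrt_eq_rpow, ← Real.rpow_mul (by positivity)]
      congr 1; ring
    rw [h1]
    apply Real.rpow_le_rpow_of_nonpos hpos ?_ (by linarith)
    apply Real.le_sqrt_of_sq_le
    nlinarith [hs.1]

theorem no_global_weak_solution_memory_critical (N k : ℕ) (hN : 1 ≤ N) (hk : 1 ≤ k)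
    (γ p : ℝ) (hγ0 : 0 ≤ γ) (hγ1 : γ < 1) (hp : 1 < p) (hpγ : p * γ ≤ 1)
    (u0 : Euc N × Euc k → ℝ) (hu0c : Continuous u0)
    (hu0z : Tendsto u0 (cocompact (Euc N × Euc k)) (nhds 0))
    (hu0nn : ∀ z, 0 ≤ u0 z) (hu0ne : ∃ z, u0 z ≠ 0) :
    ¬ ∃ u : Euc N × Euc k → ℝ → ℝ,
        (∀ z : Euc N × Euc k, ∀ t : ℝ, 0 ≤ t → 0 ≤ u z t) ∧
        (∃ U : ℝ → ZeroAtInftyContinuousMap (Euc N × Euc k) ℝ,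
          ContinuousOn U (Set.Ici 0) ∧ ∀ t ∈ Set.Ici (0 : ℝ), ∀ z, U t z = u z t) ∧
        (∀ T : ℝ, 0 < T → IsWeakSolutionMemory N k γ p T u0 u) := by
  rintro ⟨u, hu0, ⟨U, hUc, hU⟩, hweak⟩
  obtain ⟨c, hc⟩ := hu0ne
  -- the truncated solution, jointly continuous
  set W : (Euc N × Euc k) × ℝ → ℝ := fun q => U (max q.2 0) q.1 with hWdef
  have hUm : Continuous fun t : ℝ => U (max t 0) :=
    hUc.comp_continuous (by fun_prop) (fun t => Set.mem_Ici.mpr (le_max_right _ _))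
  have hW : Continuous W := by
    have h1 : Continuous fun t : ℝ => (U (max t 0)).toBCF :=
      (ZeroAtInftyContinuousMap.isometry_toBCF (α := Euc N × Euc k) (β := ℝ)).continuous.comp hUm
    have h2 : Continuous fun q : (Euc N × Euc k) × ℝ => ((U (max q.2 0)).toBCF) q.1 :=
      (h1.comp continuous_snd).eval continuous_fst
    exact h2
  have hWu : ∀ z t, 0 ≤ t → W (z, t) = u z t := by
    intro z t ht
    simp only [hWdef, max_eq_left ht]
    exact hU t ht z
  have hWn : ∀ q, 0 ≤ W q := by
    intro q
    simp only [hWdef]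
    rw [hU _ (Set.mem_Ici.mpr (le_max_right _ _))]
    exact hu0 _ _ (le_max_right _ _)
  have hWp : Continuous fun q => W q ^ p := hW.rpow_const (fun _ => Or.inr (by linarith))
  have hψc := (psi_contDiff c).continuous
  have hψ0 := psi_zero c
  have hψn := psi_nonneg c
  have hψi : Integrable (psi c) := Continuous.integrable_of_hasCompactSupport hψc
    (HasCompactSupport.intro (KK_compact c) hψ0)
  obtain ⟨lam, hlam, hgr⟩ := grushin_psi_lower c
  have hf := param_cont c W hW (psi c) hψc hψ0
  have hg := param_cont c _ hWp (psi c) hψc hψ0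
  have hgn : ∀ t : ℝ, 0 ≤ ∫ z, W (z, t) ^ p * psi c z := fun t =>
    integral_nonneg fun z => mul_nonneg (Real.rpow_nonneg (hWn _) _) (hψn z)
  have hpos : 0 < ∫ z, u0 z * psi c z := by
    refine Continuous.integral_pos_of_hasCompactSupport_nonneg_nonzero (x := c) (by fun_prop) ?_ ?_ ?_
    · exact HasCompactSupport.intro (KK_compact c) fun z hz => by simp [hψ0 z hz]
    · exact fun z => mul_nonneg (hu0nn z) (hψn z)
    · simp [psi, bmp, hc]
  refine absurd (ode_core (f0 := ∫ z, u0 z * psi c z) (Psi := ∫ z, psi c z) hγ0 hγ1 hp hpγ rfl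
    hlam (integral_nonneg hψn) hf hg
    (fun t => integral_nonneg fun z => mul_nonneg (hWn _) (hψn z)) hgn ?_ ?_) (not_le.mpr hpos)
  · intro t b d hb hd
    rw [← integral_mul_const, ← integral_const_mul, ← integral_const_mul, ← integral_add]
    · refine integral_mono ?_ ?_ fun z => ?_
      · exact (slice_int c W hW (psi c) hψc hψ0 t).mul_const b
      · exact ((slice_int c _ hWp (psi c) hψc hψ0 t).const_mul d).add (hψi.const_mul _)
      · have h1 := mul_le_mul_of_nonneg_right (young_simple hp rfl (hWn (z, t)) hb hd) (hψn z)
        simp only [Pi.add_apply]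
        linarith
    · exact (slice_int c _ hWp (psi c) hψc hψ0 t).const_mul d
    · exact hψi.const_mul _
  · intro T hT θ hθ hθc hθT hθn
    have hθcont := hθ.continuous
    have hθd : Continuous (deriv θ) := hθ.continuous_deriv (by norm_num)
    have key := (hweak T hT).2 (fun z t => psi c z * θ t)
      (((psi_contDiff c).comp contDiff_fst).mul (hθ.comp contDiff_snd))
      (by
        refine HasCompactSupport.intro ((KK_compact c).prod hθc) ?_
        rintro ⟨z, t⟩ h
        by_cases hz : z ∈ KK c
        · have ht : t ∉ tsupport θ := fun ht => h ⟨hz, ht⟩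
          simp [image_eq_zero_of_notMem_tsupport ht]
        · simp [hψ0 z hz])
      (fun z => by simp [hθT])
    have hΓ : Real.Gamma (1 - γ) ≠ 0 := (Real.Gamma_pos_of_pos (by linarith)).ne'
    have eL : (∫ z, u z T * (psi c z * θ T)) - ∫ z, u0 z * (psi c z * θ 0) =
        -((∫ z, u0 z * psi c z) * θ 0) := by
      rw [hθT, ← integral_mul_const]
      simp [mul_assoc]
    have eM : Real.Gamma (1 - γ) * (∫ t in Set.Ioc (0 : ℝ) T, ∫ z,
          fracInt (1 - γ) (fun s => absPow p (u z s)) t * (psi c z * θ t)) =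
        ∫ t in Set.Ioc (0 : ℝ) T,
          (∫ s in Set.Ioc 0 t, (t - s) ^ (-γ) * ∫ z, W (z, s) ^ p * psi c z) * θ t := by
      rw [← integral_const_mul]
      refine setIntegral_congr_fun measurableSet_Ioc fun t ht => ?_
      rw [← memory_fubini hγ1 c (fun q => W q ^ p) hWp (psi c) hψc hψ0 ht.1.le,
        ← integral_const_mul, ← integral_mul_const]
      congr 1
      funext z
      have e : fracInt (1 - γ) (fun s => absPow p (u z s)) t = 1 / Real.Gamma (1 - γ) *
          ∫ s in Set.Ioc 0 t, (t - s) ^ (-γ) * W (z, s) ^ p := by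
        unfold fracInt
        congr 1
        refine setIntegral_congr_fun measurableSet_Ioc fun s hs => ?_
        simp only
        rw [show (1 - γ - 1) = -γ by ring, hWu z s hs.1.le]
        congr 1
        unfold absPow
        have hn := hu0 z s hs.1.le
        rw [abs_of_nonneg hn]
        rcases hn.eq_or_lt with h | h
        · rw [← h, mul_zero, Real.zero_rpow (by linarith)]
        · rw [← Real.rpow_add_one h.ne', sub_add_cancel]
      rw [e]
      field_simp
    have eG : (∫ t in Set.Ioc (0 : ℝ) T, ∫ z, u z t * grushin (fun w => psi c w * θ t) z) =
        ∫ t in Set.Ioc (0 : ℝ) T, (∫ z, W (z, t) * grushin (psi c) z) * θ t := by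
      refine setIntegral_congr_fun measurableSet_Ioc fun t ht => ?_
      rw [← integral_mul_const]
      congr 1
      funext z
      rw [grushin_mul_const _ (psi_contDiff c), hWu z t ht.1.le]
      ring
    have eD : (∫ t in Set.Ioc (0 : ℝ) T, ∫ z, u z t * deriv (fun t => psi c z * θ t) t) =
        ∫ t in Set.Ioc (0 : ℝ) T, (∫ z, W (z, t) * psi c z) * deriv θ t := by
      refine setIntegral_congr_fun measurableSet_Ioc fun t ht => ?_
      rw [← integral_mul_const]
      congr 1
      funext z
      rw [deriv_const_mul _ ((hθ.differentiable (by norm_num)) t), hWu z t ht.1.le]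
      ring
    have hh := param_cont c W hW (grushin (psi c)) (grushin_psi_cont c) (grushin_psi_zero c)
    have hM : ∫ t in (0 : ℝ)..T, (1 + t ^ 2) ^ (-γ / 2) *
          (∫ s in (0 : ℝ)..t, ∫ z, W (z, s) ^ p * psi c z) * θ t ≤
        ∫ t in Set.Ioc (0 : ℝ) T,
          (∫ s in Set.Ioc 0 t, (t - s) ^ (-γ) * ∫ z, W (z, s) ^ p * psi c z) * θ t := by
      rw [intervalIntegral.integral_of_le hT.le]
      refine setIntegral_mono_on ?_ ?_ measurableSet_Ioc fun t ht => ?_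
      · have hGc : Continuous (fun t : ℝ => ∫ s in (0 : ℝ)..t, ∫ z, W (z, s) ^ p * psi c z) :=
          intervalIntegral.continuous_primitive (fun a b => hg.intervalIntegrable a b) 0
        have hgc : Continuous fun t : ℝ => (1 + t ^ 2) ^ (-γ / 2) :=
          Continuous.rpow_const (by fun_prop) (fun t => Or.inl (by positivity))
        exact ((hgc.mul hGc).mul hθcont).integrableOn_Ioc
      · have h1 := (integrableOn_Icc_iff_integrableOn_Ioc (by simp)).mpr (conv_int hγ1 _ hg hT)
        exact (h1.mul_continuousOn hθcont.continuousOn isCompact_Icc).mono_set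
          Set.Ioc_subset_Icc_self
      · exact mul_le_mul_of_nonneg_right (kernel_lower hγ0 hγ1 _ hg hgn ht.1.le) (hθn t)
    have hG : ∫ t in Set.Ioc (0 : ℝ) T, (∫ z, W (z, t) * psi c z) * (-lam * θ t) ≤
        ∫ t in Set.Ioc (0 : ℝ) T, (∫ z, W (z, t) * grushin (psi c) z) * θ t := by
      refine setIntegral_mono_on ?_ ?_ measurableSet_Ioc fun t ht => ?_
      · exact Continuous.integrableOn_Ioc (by fun_prop)
      · exact Continuous.integrableOn_Ioc (by fun_prop)
      · rw [← mul_assoc]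
        refine mul_le_mul_of_nonneg_right ?_ (hθn t)
        rw [← integral_mul_const]
        refine integral_mono ((slice_int c W hW (psi c) hψc hψ0 t).mul_const _)
          (slice_int c W hW _ (grushin_psi_cont c) (grushin_psi_zero c) t) fun z => ?_
        have := mul_le_mul_of_nonneg_left (hgr z) (hWn (z, t))
        simp only
        linarith
    have eR : ∫ t in (0 : ℝ)..T, (∫ z, W (z, t) * psi c z) * (lam * θ t - deriv θ t) =
        -(∫ t in Set.Ioc (0 : ℝ) T, (∫ z, W (z, t) * psi c z) * (-lam * θ t)) -
        ∫ t in Set.Ioc (0 : ℝ) T, (∫ z, W (z, t) * psi c z) * deriv θ t := by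
      rw [intervalIntegral.integral_of_le hT.le, ← integral_neg, ← integral_sub]
      · congr 1; funext t; ring
      · exact Continuous.integrableOn_Ioc (by fun_prop)
      · exact Continuous.integrableOn_Ioc (by fun_prop)
    rw [eR]
    rw [eL, eM, eG, eD] at key
    linarith
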